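/- arXiv:1901.08165 — 5 statements merged into one kernel-verified Lean document; each statement's English description precedes it below -/
import Mathlib

section
/- The relation ≼ on X defined by p ≼ q iff there exists α ∈ Ω with p = α • q is a partial order: it is reflexive, transitive, and antisymmetric. -/
/-- A set `X` equipped with an action of a Heyting algebra `Ω` (regarded as a
monoid under the meet operation `⊓` with unit `⊤`) together with an
`Ω`-valued equality (truth-value assignment) `e p q = ⟨p = q⟩`. -/
structure HeytingValuedSet (Ω : Type*) [HeytingAlgebra Ω] (X : Type*) where
  /-- the monoid action `•` of `(Ω, ⊓, ⊤)` on `X` -/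
  act : Ω → X → X
  /-- the truth value `⟨p = q⟩` of the assertion `p = q` -/
  e : X → X → Ω
  act_inf : ∀ (α β : Ω) (p : X), act (α ⊓ β) p = act α (act β p)
  act_top : ∀ p : X, act ⊤ p = p
  welldef : ∀ p q : X, act (e p q) p = act (e p q) q
  unit_bound : ∀ (α : Ω) (p : X), α ≤ e (act α p) p
  e_symm : ∀ p q : X, e p q ≤ e q p
  e_trans : ∀ p q r : X, e p q ⊓ e q r ≤ e p r

/-- The relation `p ≼ q` on `X`: there exists `α ∈ Ω` with `p = α • q`. -/
def HeytingValuedSet.ple {Ω : Type*} [HeytingAlgebra Ω] {X : Type*}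
    (h : HeytingValuedSet Ω X) (p q : X) : Prop :=
  ∃ α : Ω, p = h.act α q

/-- The relation `p ≼ q` induced by an action `act : Ω → X → X`: `p` is a multiple `α • q` of `q`.
The action is an explicit map, as in `HeytingValuedSet`, so that `HeytingValuedSet.ple` is
definitionally the case `act = h.act`. -/
def ActLE {Ω X : Type*} (act : Ω → X → X) (p q : X) : Prop :=
  ∃ α : Ω, p = act α q

theorem eq_of_eq_apply_of_commute {X : Type*} {f g : X → X} {p q : X}
    (f_idem : ∀ x, f (f x) = f x) (f_comm_g : Function.Commute f g)
    (hp : p = f q) (hq : q = g p) : p = q := by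
  have p_fixed : f p = p := by rw [hp, f_idem]
  calc
    p = f q := hp
    _ = f (g p) := by rw [← hq]
    _ = g (f p) := f_comm_g p
    _ = g p := by rw [p_fixed]
    _ = q := hq.symm

section MeetAction

variable {Ω X : Type*} {act : Ω → X → X}

theorem act_idem [SemilatticeInf Ω] (act_inf : ∀ α β p, act (α ⊓ β) p = act α (act β p))
    (α : Ω) (p : X) : act α (act α p) = act α p := by
  rw [← act_inf, inf_idem]

theorem act_commute [SemilatticeInf Ω] (act_inf : ∀ α β p, act (α ⊓ β) p = act α (act β p))
    (α β : Ω) : Function.Commute (act α) (act β) := fun p => by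
  rw [← act_inf, inf_comm, act_inf]

namespace ActLE

theorem refl [Top Ω] (act_top : ∀ p, act ⊤ p = p) (p : X) : ActLE act p p :=
  ⟨⊤, (act_top p).symm⟩

theorem trans [Min Ω] (act_inf : ∀ α β p, act (α ⊓ β) p = act α (act β p)) {p q r : X} :
    ActLE act p q → ActLE act q r → ActLE act p r := by
  rintro ⟨α, rfl⟩ ⟨β, rfl⟩
  exact ⟨α ⊓ β, (act_inf α β r).symm⟩

theorem antisymm [SemilatticeInf Ω] (act_inf : ∀ α β p, act (α ⊓ β) p = act α (act β p))
    {p q : X} : ActLE act p q → ActLE act q p → p = q := by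
  rintro ⟨α, hp⟩ ⟨β, hq⟩
  exact eq_of_eq_apply_of_commute (act_idem act_inf α) (act_commute act_inf α β) hp hq

end ActLE

end MeetAction

theorem stmt_4_general {Ω X : Type*} [SemilatticeInf Ω] [OrderTop Ω] {act : Ω → X → X}
    (act_inf : ∀ α β p, act (α ⊓ β) p = act α (act β p)) (act_top : ∀ p, act ⊤ p = p) :
    (∀ p : X, ActLE act p p) ∧
    (∀ p q r : X, ActLE act p q → ActLE act q r → ActLE act p r) ∧
    (∀ p q : X, ActLE act p q → ActLE act q p → p = q) :=
  ⟨ActLE.refl act_top, fun _ _ _ => ActLE.trans act_inf, fun _ _ => ActLE.antisymm act_inf⟩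

/-- The relation `≼` on `X` defined by `p ≼ q` iff `∃ α, p = α • q` is a
partial order: reflexive, transitive and antisymmetric. -/
theorem stmt_4 {Ω X : Type*} [HeytingAlgebra Ω] (h : HeytingValuedSet Ω X) :
    (∀ p : X, h.ple p p) ∧
    (∀ p q r : X, h.ple p q → h.ple q r → h.ple p r) ∧
    (∀ p q : X, h.ple p q → h.ple q p → p = q) :=
  stmt_4_general h.act_inf h.act_top
end

section
/- For all p, q ∈ X, the element p ∧ q := ⟨p=q⟩ • p (which also equals ⟨p=q⟩ • q) is a greatest lower bound of p and q for the partial order ≼ on X: p ∧ q ≼ p, p ∧ q ≼ q, and whenever r ≼ p and r ≼ q then r ≼ p ∧ q. -/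
/-- A set with an `Ω`-valued equality `e p q = ⟨p = q⟩` compatible with an action of the meet
semilattice `Ω`. It is `HeytingValuedSet` without implication and without a unit: the action is
one of the semigroup `(Ω, ⊓)`. -/
structure SemilatticeValuedSet (Ω : Type*) [SemilatticeInf Ω] (X : Type*) where
  /-- the semigroup action `•` of `(Ω, ⊓)` on `X` -/
  act : Ω → X → X
  /-- the truth value `⟨p = q⟩` -/
  e : X → X → Ω
  act_inf : ∀ (α β : Ω) (p : X), act (α ⊓ β) p = act α (act β p)
  welldef : ∀ p q : X, act (e p q) p = act (e p q) q
  unit_bound : ∀ (α : Ω) (p : X), α ≤ e (act α p) p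
  e_symm : ∀ p q : X, e p q ≤ e q p
  e_trans : ∀ p q r : X, e p q ⊓ e q r ≤ e p r

namespace SemilatticeValuedSet

variable {Ω X : Type*} [SemilatticeInf Ω] (s : SemilatticeValuedSet Ω X) {α β : Ω} {p q r : X}

/-- The restriction relation `p ≼ q`, the analogue of `HeytingValuedSet.ple`. It need not
be reflexive, as no element of `Ω` is required to act as the identity. -/
def ple (p q : X) : Prop :=
  ∃ α : Ω, p = s.act α q

theorem act_ple (α : Ω) (p : X) : s.ple (s.act α p) p :=
  ⟨α, rfl⟩

theorem act_act_of_le (hαβ : α ≤ β) (p : X) : s.act α (s.act β p) = s.act α p := by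
  rw [← s.act_inf, inf_eq_left.mpr hαβ]

theorem act_inf_eq_of_act_eq_act (h : s.act α p = s.act β q) :
    s.act (α ⊓ β) p = s.act α p :=
  calc
    s.act (α ⊓ β) p = s.act β (s.act α p) := by rw [inf_comm, s.act_inf]
    _ = s.act β (s.act β q) := by rw [h]
    _ = s.act β q := s.act_act_of_le le_rfl q
    _ = s.act α p := h.symm

-- Transitivity is applied through the common restriction `α • p = β • q`.
theorem inf_le_e_of_act_eq_act (h : s.act α p = s.act β q) : α ⊓ β ≤ s.e p q :=
  calc
    α ⊓ β ≤ s.e p (s.act α p) ⊓ s.e (s.act β q) q :=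
      inf_le_inf ((s.unit_bound α p).trans (s.e_symm _ _)) (s.unit_bound β q)
    _ = s.e p (s.act α p) ⊓ s.e (s.act α p) q := by rw [h]
    _ ≤ s.e p q := s.e_trans _ _ _

theorem ple_act_e (hp : s.ple r p) (hq : s.ple r q) : s.ple r (s.act (s.e p q) p) := by
  obtain ⟨α, rfl⟩ := hp
  obtain ⟨β, h⟩ := hq
  refine ⟨α ⊓ β, ?_⟩
  rw [s.act_act_of_le (s.inf_le_e_of_act_eq_act h), s.act_inf_eq_of_act_eq_act h]

end SemilatticeValuedSet

/-- The semilattice-valued set obtained from a Heyting-valued set by forgetting implication and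
the unit; the relations `ple` of the two agree definitionally. -/
def HeytingValuedSet.toSemilatticeValuedSet {Ω X : Type*} [HeytingAlgebra Ω]
    (h : HeytingValuedSet Ω X) : SemilatticeValuedSet Ω X where
  __ := h

theorem stmt_6_general {Ω X : Type*} [SemilatticeInf Ω] (s : SemilatticeValuedSet Ω X)
    (p q : X) :
    s.act (s.e p q) p = s.act (s.e p q) q ∧
    s.ple (s.act (s.e p q) p) p ∧
    s.ple (s.act (s.e p q) p) q ∧
    (∀ r : X, s.ple r p → s.ple r q → s.ple r (s.act (s.e p q) p)) :=
  ⟨s.welldef p q, s.act_ple _ p, s.welldef p q ▸ s.act_ple _ q, fun _ => s.ple_act_e⟩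

/-- For all `p, q ∈ X`, the element `p ∧ q := ⟨p=q⟩ • p` (which also equals
`⟨p=q⟩ • q`) is a greatest lower bound of `p` and `q` for the partial order
`≼` on `X`. -/
theorem stmt_6 {Ω X : Type*} [HeytingAlgebra Ω] (h : HeytingValuedSet Ω X)
    (p q : X) :
    h.act (h.e p q) p = h.act (h.e p q) q ∧
    h.ple (h.act (h.e p q) p) p ∧
    h.ple (h.act (h.e p q) p) q ∧
    (∀ r : X, h.ple r p → h.ple r q → h.ple r (h.act (h.e p q) p)) :=
  stmt_6_general h.toSemilatticeValuedSet p q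
end

section
/- For every p ∈ X, the monotone maps F_p : Ω → X, F_p(α) = α • p, and G_p : X → Ω, G_p(q) = ⟨p = ⟨p=q⟩ • p⟩ (the truth value of p ≼ q, i.e. e(p, p ∧ q) where p ∧ q = ⟨p=q⟩ • p), form an adjunction (Galois connection) between the posets (Ω, ≤) and (X, ≼): for all α ∈ Ω and q ∈ X, α • p ≼ q if and only if α ≤ G_p(q). -/
/-!
By well-definedness and the unit bound, `⟨p=q⟩` is the largest truth value `α` with `α • p = α • q`.
Hence acting commutes with meets, `(α • p) ∧ q = α • (p ∧ q)`, and the adjunction follows from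
`α • p ≼ q ↔ (α • p) ∧ q = α • p ↔ α • (p ∧ q) = α • p ↔ α ≤ ⟨p = p ∧ q⟩`.
-/

/-- A set `X` with an action of a meet-semilattice `Ω`, regarded as a semigroup under `⊓`, and an
`Ω`-valued equality `e p q = ⟨p = q⟩`: the analogue of `HeytingValuedSet` over a semilattice. -/
structure InfValuedSet (Ω : Type*) [SemilatticeInf Ω] (X : Type*) where
  /-- the semigroup action `•` of `(Ω, ⊓)` on `X` -/
  act : Ω → X → X
  /-- the truth value `⟨p = q⟩` -/
  e : X → X → Ω
  act_inf : ∀ (α β : Ω) (p : X), act (α ⊓ β) p = act α (act β p)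
  welldef : ∀ p q : X, act (e p q) p = act (e p q) q
  unit_bound : ∀ (α : Ω) (p : X), α ≤ e (act α p) p
  e_symm : ∀ p q : X, e p q ≤ e q p
  e_trans : ∀ p q r : X, e p q ⊓ e q r ≤ e p r

namespace InfValuedSet

variable {Ω X : Type*} [SemilatticeInf Ω] (h : InfValuedSet Ω X)

/-- The relation `p ≼ q`, as in `HeytingValuedSet.ple`. -/
def ple (p q : X) : Prop :=
  ∃ α : Ω, p = h.act α q

/-- The element `p ∧ q = ⟨p = q⟩ • p`, the binary meet for `≼`. -/
def meet (p q : X) : X :=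
  h.act (h.e p q) p

theorem act_act_of_le {α β : Ω} (hβα : β ≤ α) (p : X) : h.act β (h.act α p) = h.act β p := by
  rw [← h.act_inf, inf_eq_left.mpr hβα]

theorem act_act_of_ge {α β : Ω} (hβα : β ≤ α) (p : X) : h.act α (h.act β p) = h.act β p := by
  rw [← h.act_inf, inf_eq_right.mpr hβα]

theorem le_e_iff {α : Ω} {p q : X} : α ≤ h.e p q ↔ h.act α p = h.act α q := by
  constructor
  · intro hα
    calc h.act α p = h.act α (h.act (h.e p q) p) := (h.act_act_of_le hα p).symm
      _ = h.act α (h.act (h.e p q) q) := by rw [h.welldef]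
      _ = h.act α q := h.act_act_of_le hα q
  · intro hpq
    have left_le : α ≤ h.e p (h.act α p) := (h.unit_bound α p).trans (h.e_symm _ _)
    have right_le : α ≤ h.e (h.act α p) q := hpq ▸ h.unit_bound α q
    exact (le_inf left_le right_le).trans (h.e_trans _ _ _)

theorem ple_iff_meet_eq_left {p q : X} : h.ple p q ↔ h.meet p q = p := by
  constructor
  · rintro ⟨β, rfl⟩
    exact h.act_act_of_ge (h.unit_bound β q) q
  · intro hp
    exact ⟨h.e p q, hp.symm.trans (h.welldef p q)⟩

theorem inf_e_act_left (α : Ω) (p q : X) : α ⊓ h.e (h.act α p) q = α ⊓ h.e p q := by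
  refine eq_of_forall_le_iff fun β => ?_
  simp only [le_inf_iff, le_e_iff]
  exact and_congr_right fun hβ => by rw [h.act_act_of_le hβ]

theorem meet_act_left (α : Ω) (p q : X) : h.meet (h.act α p) q = h.act α (h.meet p q) := by
  simp only [meet]
  rw [← h.act_inf, inf_comm, h.inf_e_act_left, h.act_inf]

end InfValuedSet

/-- The equality-valued set over the meet-semilattice underlying the Heyting algebra `Ω`. -/
def HeytingValuedSet.toInfValuedSet {Ω X : Type*} [HeytingAlgebra Ω]
    (h : HeytingValuedSet Ω X) : InfValuedSet Ω X :=
  { h with }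

theorem stmt_7_general {Ω X : Type*} [SemilatticeInf Ω] (h : InfValuedSet Ω X) (p : X) (α : Ω)
    (q : X) : h.ple (h.act α p) q ↔ α ≤ h.e p (h.meet p q) :=
  calc h.ple (h.act α p) q
    _ ↔ h.meet (h.act α p) q = h.act α p := h.ple_iff_meet_eq_left
    _ ↔ h.act α p = h.act α (h.meet p q) := by rw [h.meet_act_left, eq_comm]
    _ ↔ α ≤ h.e p (h.meet p q) := h.le_e_iff.symm

/-- For every `p ∈ X`, the maps `F_p : Ω → X`, `F_p(α) = α • p`, and
`G_p : X → Ω`, `G_p(q) = ⟨p = ⟨p=q⟩ • p⟩` (the truth value of `p ≼ q`,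
i.e. `e(p, p ∧ q)`), form a Galois connection between `(Ω, ≤)` and `(X, ≼)`:
for all `α ∈ Ω` and `q ∈ X`, `α • p ≼ q` iff `α ≤ G_p(q)`. -/
theorem stmt_7 {Ω X : Type*} [HeytingAlgebra Ω] (h : HeytingValuedSet Ω X)
    (p : X) :
    ∀ (α : Ω) (q : X),
      h.ple (h.act α p) q ↔ α ≤ h.e p (h.act (h.e p q) p) :=
  stmt_7_general h.toInfValuedSet p
end

section
/- Let (F, θ) be a monad morphism from T₁ to T₂, and let F̂ : Alg(T₁) → Alg(T₂) be the induced functor, defined by F̂(A, σ) = (FA, Fσ ∘ θ_A) and F̂(h) = Fh. If F is fully faithful and every component θ_A is an epimorphism, then F̂ is fully faithful. -/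
open CategoryTheory

/-!
Naturality of `θ` gives `θ_A ≫ F (T₁ h ≫ τ) = T₂ (F h) ≫ θ_B ≫ F τ` for every `h : A ⟶ B` between
carriers of algebras `(A, σ)` and `(B, τ)`. Hence if `F h` is a homomorphism between the images,
then `T₁ h ≫ τ` and `σ ≫ h` agree after applying `F` and precomposing with `θ_A`, and both
operations can be cancelled. So the preimage under `F` of a homomorphism is a homomorphism.
-/

section Extensionality

variable {C : Type*} [Category C] {T : Monad C}

theorem algebra_ext {X Y : T.Algebra} (hA : X.A = Y.A) (ha : X.a ≍ Y.a) : X = Y := by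
  cases X
  cases Y
  cases hA
  cases ha
  rfl

theorem algebraHom_hext {X X' Y Y' : T.Algebra} (hX : X = X') (hY : Y = Y')
    {f : X ⟶ Y} {g : X' ⟶ Y'} (h : f.f ≍ g.f) : f ≍ g := by
  subst hX hY
  exact heq_of_eq (Monad.Algebra.Hom.ext (eq_of_heq h))

end Extensionality

/-- A monad morphism from `T₁` to `T₂` over a functor `F : C₁ ⥤ C₂`, with components
`T₂ (F A) ⟶ F (T₁ A)`. For `F = 𝟭 C` this is a `MonadHom` from `T₂` to `T₁`, in that order. -/
structure MonadHomOver {C₁ C₂ : Type*} [Category C₁] [Category C₂]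
    (T₁ : Monad C₁) (T₂ : Monad C₂) (F : C₁ ⥤ C₂) where
  toNatTrans : F ⋙ T₂.toFunctor ⟶ T₁.toFunctor ⋙ F
  app_μ (A : C₁) : T₂.μ.app (F.obj A) ≫ toNatTrans.app A =
    T₂.map (toNatTrans.app A) ≫ toNatTrans.app (T₁.obj A) ≫ F.map (T₁.μ.app A)
  app_η (A : C₁) : T₂.η.app (F.obj A) ≫ toNatTrans.app A = F.map (T₁.η.app A)

namespace MonadHomOver

variable {C₁ C₂ : Type*} [Category C₁] [Category C₂]
  {T₁ : Monad C₁} {T₂ : Monad C₂} {F : C₁ ⥤ C₂} (θ : MonadHomOver T₁ T₂ F)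

theorem naturality {A B : C₁} (h : A ⟶ B) :
    T₂.map (F.map h) ≫ θ.toNatTrans.app B = θ.toNatTrans.app A ≫ F.map (T₁.map h) :=
  θ.toNatTrans.naturality h

theorem app_comp_map_map_comp {A B D : C₁} (h : A ⟶ B) (b : T₁.obj B ⟶ D) :
    θ.toNatTrans.app A ≫ F.map (T₁.map h ≫ b) =
      T₂.map (F.map h) ≫ θ.toNatTrans.app B ≫ F.map b := by
  rw [F.map_comp, ← Category.assoc, ← θ.naturality, Category.assoc]

/-- The image `(F A, θ_A ≫ F σ)` of a `T₁`-algebra `(A, σ)`. -/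
def mapAlgebra (X : T₁.Algebra) : T₂.Algebra where
  A := F.obj X.A
  a := θ.toNatTrans.app X.A ≫ F.map X.a
  unit := by
    rw [← Category.assoc, θ.app_η, ← F.map_comp, X.unit]
    exact F.map_id X.A
  assoc := by
    calc T₂.μ.app (F.obj X.A) ≫ θ.toNatTrans.app X.A ≫ F.map X.a
        = T₂.map (θ.toNatTrans.app X.A) ≫ θ.toNatTrans.app (T₁.obj X.A) ≫
            F.map (T₁.μ.app X.A ≫ X.a) := by
          rw [← Category.assoc, θ.app_μ, F.map_comp]
          simp only [Category.assoc]
      _ = T₂.map (θ.toNatTrans.app X.A) ≫ T₂.map (F.map X.a) ≫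
            θ.toNatTrans.app X.A ≫ F.map X.a := by
          rw [X.assoc, θ.app_comp_map_map_comp]
      _ = T₂.map (θ.toNatTrans.app X.A ≫ F.map X.a) ≫ θ.toNatTrans.app X.A ≫ F.map X.a := by
          rw [T₂.map_comp, Category.assoc]

/-- The functor `F̂` between Eilenberg–Moore categories induced by a monad morphism over `F`. -/
def algebraFunctor : T₁.Algebra ⥤ T₂.Algebra where
  obj := θ.mapAlgebra
  map {X Y} f :=
    { f := F.map f.f
      h := by
        calc T₂.map (F.map f.f) ≫ θ.toNatTrans.app Y.A ≫ F.map Y.a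
            = θ.toNatTrans.app X.A ≫ F.map (X.a ≫ f.f) := by
              rw [← θ.app_comp_map_map_comp, f.h]
          _ = (θ.toNatTrans.app X.A ≫ F.map X.a) ≫ F.map f.f := by
              rw [F.map_comp, Category.assoc] }

theorem eq_algebraFunctor (G : T₁.Algebra ⥤ T₂.Algebra)
    (hobj : ∀ X, (G.obj X).A = F.obj X.A ∧ (G.obj X).a ≍ θ.toNatTrans.app X.A ≫ F.map X.a)
    (hmap : ∀ (X Y : T₁.Algebra) (f : X ⟶ Y), (G.map f).f ≍ F.map f.f) :
    G = θ.algebraFunctor := by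
  have obj_eq (X : T₁.Algebra) : G.obj X = θ.algebraFunctor.obj X :=
    algebra_ext (hobj X).1 (hobj X).2
  exact Functor.hext obj_eq fun X Y f ↦ algebraHom_hext (obj_eq X) (obj_eq Y) (hmap X Y f)

instance algebraFunctor_faithful [F.Faithful] : θ.algebraFunctor.Faithful where
  map_injective hfg :=
    Monad.Algebra.Hom.ext (F.map_injective (congrArg Monad.Algebra.Hom.f hfg))

theorem map_comp_eq_of_map_mapAlgebra [F.Faithful] {X Y : T₁.Algebra}
    [Epi (θ.toNatTrans.app X.A)] {h : X.A ⟶ Y.A}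
    (hF : T₂.map (F.map h) ≫ (θ.mapAlgebra Y).a = (θ.mapAlgebra X).a ≫ F.map h) :
    T₁.map h ≫ Y.a = X.a ≫ h := by
  apply F.map_injective
  rw [← cancel_epi (θ.toNatTrans.app X.A)]
  calc θ.toNatTrans.app X.A ≫ F.map (T₁.map h ≫ Y.a)
      = T₂.map (F.map h) ≫ θ.toNatTrans.app Y.A ≫ F.map Y.a := θ.app_comp_map_map_comp h Y.a
    _ = (θ.toNatTrans.app X.A ≫ F.map X.a) ≫ F.map h := hF
    _ = θ.toNatTrans.app X.A ≫ F.map (X.a ≫ h) := by rw [F.map_comp, Category.assoc]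

theorem algebraFunctor_full [F.Full] [F.Faithful]
    (hepi : ∀ X : T₁.Algebra, Epi (θ.toNatTrans.app X.A)) : θ.algebraFunctor.Full where
  map_surjective {X Y} g := by
    obtain ⟨h, hg⟩ : ∃ h : X.A ⟶ Y.A, F.map h = g.f := F.map_surjective g.f
    have hF : T₂.map (F.map h) ≫ (θ.mapAlgebra Y).a = (θ.mapAlgebra X).a ≫ F.map h := by
      rw [hg]
      exact g.h
    have := hepi X
    exact ⟨⟨h, θ.map_comp_eq_of_map_mapAlgebra hF⟩, Monad.Algebra.Hom.ext hg⟩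

end MonadHomOver

/-- Let `(F, θ)` be a monad morphism from `T₁` to `T₂`, and let
`F̂ : Alg(T₁) ⥤ Alg(T₂)` be the induced functor (on objects
`F̂(A, σ) = (FA, Fσ ∘ θ_A)`, on morphisms `F̂(h) = Fh`).  If `F` is fully
faithful and every component `θ_A` is an epimorphism, then `F̂` is fully
faithful. -/
theorem stmt_15 {C₁ C₂ : Type*} [Category C₁] [Category C₂]
    (T₁ : Monad C₁) (T₂ : Monad C₂) (F : C₁ ⥤ C₂)
    (θ : F ⋙ T₂.toFunctor ⟶ T₁.toFunctor ⋙ F)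
    (θ_μ : ∀ A : C₁, T₂.μ.app (F.obj A) ≫ θ.app A =
      T₂.map (θ.app A) ≫ θ.app (T₁.obj A) ≫ F.map (T₁.μ.app A))
    (θ_η : ∀ A : C₁, T₂.η.app (F.obj A) ≫ θ.app A = F.map (T₁.η.app A))
    (Fhat : Monad.Algebra T₁ ⥤ Monad.Algebra T₂)
    (hobj : ∀ X : Monad.Algebra T₁,
      (Fhat.obj X).A = F.obj X.A ∧ HEq (Fhat.obj X).a (θ.app X.A ≫ F.map X.a))
    (hmap : ∀ (X Y : Monad.Algebra T₁) (f : X ⟶ Y),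
      HEq (Fhat.map f).f (F.map f.f))
    (hFull : F.Full) (hFaithful : F.Faithful)
    (hepi : ∀ A : C₁, Epi (θ.app A)) :
    Fhat.Full ∧ Fhat.Faithful := by
  let Θ : MonadHomOver T₁ T₂ F := ⟨θ, θ_μ, θ_η⟩
  obtain rfl : Fhat = Θ.algebraFunctor := Θ.eq_algebraFunctor Fhat hobj hmap
  exact ⟨Θ.algebraFunctor_full fun X ↦ hepi X.A, Θ.algebraFunctor_faithful⟩
end

section
/- Let (F, θ) be a monad morphism from T₁ to T₂ with θ a natural isomorphism with inverse β (so θ_A ∘ β_A = id and β_A ∘ θ_A = id for every A), and suppose F is fully faithful. Let F̂ be the induced functor with U₂ ∘ F̂ = F ∘ U₁, and let G₁ : D → C₁, G₂ : D → Alg(T₂) be functors with F ∘ G₁ = U₂ ∘ G₂. Then for every object D of D, writing σ̃_D : T₂(FG₁D) → FG₁D for the structure map of G₂D (whose carrier is FG₁D), the pair (G₁D, F⁻¹(σ̃_D ∘ β_{G₁D})) is a T₁-algebra, where F⁻¹ denotes the inverse of F's bijection on hom-sets. -/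
open CategoryTheory

/-!
The inverse `β` of an invertible monad morphism is colax: it satisfies the unit and multiplication
laws in the opposite direction. If `F` is faithful and `i : F A ⟶ B` is a monomorphism into a
`T₂`-algebra `(B, a)`, equations between maps into `A` may be checked after applying `F` and
composing with `i`. When `F σ ≫ i = β_A ≫ T₂ i ≫ a`, colaxness and naturality of `β` turn the
algebra laws of `σ`, checked in this way, into those of `a`. The identification of `F (G₁ D₀)` with
the carrier of `G₂ D₀` serves as `i`.
-/

section MonadMorphisms

variable {C₁ C₂ : Type*} [Category C₁] [Category C₂] {T₁ : Monad C₁} {T₂ : Monad C₂} {F : C₁ ⥤ C₂}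

/-- `θ` makes `F` a (lax) morphism of monads from `T₁` to `T₂`; it is the datum needed to lift `F`
to a functor from `T₁`-algebras to `T₂`-algebras. -/
structure IsMonadMorphism (θ : F ⋙ T₂.toFunctor ⟶ T₁.toFunctor ⋙ F) : Prop where
  unit (A : C₁) : T₂.η.app (F.obj A) ≫ θ.app A = F.map (T₁.η.app A)
  mul (A : C₁) : T₂.μ.app (F.obj A) ≫ θ.app A =
    T₂.map (θ.app A) ≫ θ.app (T₁.obj A) ≫ F.map (T₁.μ.app A)

/-- `β` makes `F` a colax morphism of monads from `T₁` to `T₂` (Street's monad opfunctors): the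
laws of `IsMonadMorphism`, for a transformation in the opposite direction. -/
structure IsMonadOpfunctor (β : T₁.toFunctor ⋙ F ⟶ F ⋙ T₂.toFunctor) : Prop where
  unit (A : C₁) : F.map (T₁.η.app A) ≫ β.app A = T₂.η.app (F.obj A)
  mul (A : C₁) : F.map (T₁.μ.app A) ≫ β.app A =
    β.app (T₁.obj A) ≫ T₂.map (β.app A) ≫ T₂.μ.app (F.obj A)

theorem IsMonadMorphism.isMonadOpfunctor_inv {θ : F ⋙ T₂.toFunctor ≅ T₁.toFunctor ⋙ F}
    (hθ : IsMonadMorphism θ.hom) : IsMonadOpfunctor θ.inv where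
  unit A := by simp [← hθ.unit]
  mul A := by
    have map_inv_hom : T₂.map (θ.inv.app A) ≫ T₂.map (θ.hom.app A) = 𝟙 _ := by
      rw [← T₂.map_comp, θ.inv_hom_id_app]
      exact T₂.map_id _
    have map_mul : F.map (T₁.μ.app A) = θ.inv.app (T₁.obj A) ≫ T₂.map (θ.inv.app A) ≫
        T₂.μ.app (F.obj A) ≫ θ.hom.app A := by
      rw [hθ.mul, reassoc_of% map_inv_hom]
      exact (θ.inv_hom_id_app_assoc (T₁.obj A) _).symm
    simp [map_mul]

namespace IsMonadOpfunctor

variable [F.Faithful] {β : T₁.toFunctor ⋙ F ⟶ F ⋙ T₂.toFunctor}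
  {A : C₁} {B : T₂.Algebra} {i : F.obj A ⟶ B.A} [Mono i] {σ : T₁.obj A ⟶ A}

theorem unit_comp_eq_id (hβ : IsMonadOpfunctor β)
    (hσ : F.map σ ≫ i = β.app A ≫ T₂.map i ≫ B.a) : T₁.η.app A ≫ σ = 𝟙 A := by
  have η_naturality : T₂.η.app (F.obj A) ≫ T₂.map i = i ≫ T₂.η.app B.A :=
    (T₂.η.naturality i).symm
  apply F.map_injective
  rw [← cancel_mono i]
  calc F.map (T₁.η.app A ≫ σ) ≫ i
      = (F.map (T₁.η.app A) ≫ β.app A) ≫ T₂.map i ≫ B.a := by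
        simp only [F.map_comp, Category.assoc, hσ]
    _ = (T₂.η.app (F.obj A) ≫ T₂.map i) ≫ B.a := by rw [hβ.unit, Category.assoc]
    _ = i ≫ T₂.η.app B.A ≫ B.a := by rw [η_naturality, Category.assoc]
    _ = F.map (𝟙 A) ≫ i := by rw [B.unit, Category.comp_id, F.map_id, Category.id_comp]

theorem mul_comp_eq_map_comp (hβ : IsMonadOpfunctor β)
    (hσ : F.map σ ≫ i = β.app A ≫ T₂.map i ≫ B.a) : T₁.μ.app A ≫ σ = T₁.map σ ≫ σ := by
  have β_naturality : F.map (T₁.map σ) ≫ β.app A = β.app (T₁.obj A) ≫ T₂.map (F.map σ) :=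
    β.naturality σ
  have μ_naturality : T₂.map (T₂.map i) ≫ T₂.μ.app B.A = T₂.μ.app (F.obj A) ≫ T₂.map i :=
    T₂.μ.naturality i
  apply F.map_injective
  rw [← cancel_mono i]
  calc F.map (T₁.μ.app A ≫ σ) ≫ i
      = (F.map (T₁.μ.app A) ≫ β.app A) ≫ T₂.map i ≫ B.a := by
        simp only [F.map_comp, Category.assoc, hσ]
    _ = β.app (T₁.obj A) ≫ T₂.map (β.app A) ≫ (T₂.μ.app (F.obj A) ≫ T₂.map i) ≫ B.a := by
        simp only [hβ.mul, Category.assoc]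
    _ = β.app (T₁.obj A) ≫ T₂.map (β.app A ≫ T₂.map i ≫ B.a) ≫ B.a := by
        simp only [← μ_naturality, Category.assoc, B.assoc, T₂.map_comp]
    _ = (β.app (T₁.obj A) ≫ T₂.map (F.map σ)) ≫ T₂.map i ≫ B.a := by
        simp only [← hσ, T₂.map_comp, Category.assoc]
    _ = F.map (T₁.map σ ≫ σ) ≫ i := by
        simp only [← β_naturality, F.map_comp, Category.assoc, hσ]

end IsMonadOpfunctor

theorem stmt_17_general [F.Faithful] {β : T₁.toFunctor ⋙ F ⟶ F ⋙ T₂.toFunctor}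
    (hβ : IsMonadOpfunctor β) {A : C₁} {B : T₂.Algebra} (i : F.obj A ⟶ B.A) [Mono i]
    {σ : T₁.obj A ⟶ A} (hσ : F.map σ ≫ i = β.app A ≫ T₂.map i ≫ B.a) :
    T₁.η.app A ≫ σ = 𝟙 A ∧ T₁.μ.app A ≫ σ = T₁.map σ ≫ σ :=
  ⟨hβ.unit_comp_eq_id hσ, hβ.mul_comp_eq_map_comp hσ⟩

end MonadMorphisms

/-- Let `(F, θ)` be a monad morphism from `T₁` to `T₂` with `θ` a natural
isomorphism with inverse `β` (so `θ_A ∘ β_A = id` and `β_A ∘ θ_A = id` for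
every `A`), and suppose `F` is fully faithful.  Let `G₁ : D ⥤ C₁`,
`G₂ : D ⥤ Alg(T₂)` be functors with `F ∘ G₁ = U₂ ∘ G₂`.  Then for every
object `D₀` of `D`, writing `σ̃ : T₂(FG₁D₀) ⟶ FG₁D₀` for the structure map of
`G₂D₀` (whose carrier is `FG₁D₀`, identified via `eqToHom`), the pair
`(G₁D₀, F⁻¹(σ̃ ∘ β_{G₁D₀}))` is a `T₁`-algebra, where `F⁻¹` is the inverse of
`F`'s bijection on hom-sets. -/
theorem stmt_17 {C₁ C₂ : Type*} [Category C₁] [Category C₂]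
    (T₁ : Monad C₁) (T₂ : Monad C₂) (F : C₁ ⥤ C₂)
    [F.Full] [F.Faithful]
    (θ : F ⋙ T₂.toFunctor ⟶ T₁.toFunctor ⋙ F)
    (β : T₁.toFunctor ⋙ F ⟶ F ⋙ T₂.toFunctor)
    (hβθ : ∀ A : C₁, β.app A ≫ θ.app A = 𝟙 (F.obj (T₁.obj A)))
    (hθβ : ∀ A : C₁, θ.app A ≫ β.app A = 𝟙 (T₂.obj (F.obj A)))
    (θ_μ : ∀ A : C₁, T₂.μ.app (F.obj A) ≫ θ.app A =
      T₂.map (θ.app A) ≫ θ.app (T₁.obj A) ≫ F.map (T₁.μ.app A))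
    (θ_η : ∀ A : C₁, T₂.η.app (F.obj A) ≫ θ.app A = F.map (T₁.η.app A))
    {D : Type*} [Category D] (G₁ : D ⥤ C₁) (G₂ : D ⥤ Monad.Algebra T₂)
    (hsq : G₁ ⋙ F = G₂ ⋙ Monad.forget T₂) (D₀ : D) :
    let σ : T₁.obj (G₁.obj D₀) ⟶ G₁.obj D₀ :=
      F.preimage (β.app (G₁.obj D₀) ≫
        T₂.map (eqToHom (Functor.congr_obj hsq D₀)) ≫
        (G₂.obj D₀).a ≫ eqToHom (Functor.congr_obj hsq D₀).symm)
    T₁.η.app (G₁.obj D₀) ≫ σ = 𝟙 (G₁.obj D₀) ∧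
    T₁.μ.app (G₁.obj D₀) ≫ σ = T₁.map σ ≫ σ := by
  intro σ
  let θIso : F ⋙ T₂.toFunctor ≅ T₁.toFunctor ⋙ F :=
    { hom := θ, inv := β, hom_inv_id := by ext A; exact hθβ A, inv_hom_id := by ext A; exact hβθ A }
  have hθ : IsMonadMorphism θIso.hom := ⟨θ_η, θ_μ⟩
  have carrier_eq : F.obj (G₁.obj D₀) = (G₂.obj D₀).A := Functor.congr_obj hsq D₀
  have map_σ : F.map σ = β.app (G₁.obj D₀) ≫ T₂.map (eqToHom carrier_eq) ≫
      (G₂.obj D₀).a ≫ eqToHom carrier_eq.symm := F.map_preimage _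
  exact stmt_17_general hθ.isMonadOpfunctor_inv (eqToHom carrier_eq) (by simp [map_σ, θIso])
end
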